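/- arXiv:2311.18024 — 3 statements merged into one kernel-verified Lean document; each statement's English description precedes it below -/
import Mathlib

section
/- Let β = (Y_g, β_g)_{g∈G} be a global action of a groupoid G on a set Y and let X ⊆ Y. For each g ∈ G put X_g = X ∩ β_g(X ∩ Y_{g⁻¹}) and Ȳ_g = ⋃_{h ∈ G, r(h)=r(g)} β_h(X_{d(h)}). Then Ȳ = ⋃_{e ∈ G_0} Ȳ_e is the smallest β-invariant subset of Y containing X; that is, X ⊆ Ȳ, β_g(Ȳ ∩ Y_{g⁻¹}) = Ȳ ∩ Y_g for all g ∈ G, and any β-invariant subset S of Y with X ⊆ S contains Ȳ. -/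
universe u v w

/-- A groupoid as an algebraic structure: a set `G` with a (totalized) partially
defined multiplication, inversion, source `d` and range `r`.  The product `mul g h`
is only meaningful when `d g = r h`. -/
structure SetGroupoid (G : Type u) where
  mul : G → G → G
  inv : G → G
  d : G → G
  r : G → G
  inv_inv : ∀ g, inv (inv g) = g
  d_inv : ∀ g, d (inv g) = r g
  r_inv : ∀ g, r (inv g) = d g
  mul_d_self : ∀ g, mul g (d g) = g
  r_mul_self : ∀ g, mul (r g) g = g
  inv_mul : ∀ g, mul (inv g) g = d g
  mul_inv : ∀ g, mul g (inv g) = r g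
  d_mul : ∀ g h, d g = r h → d (mul g h) = d h
  r_mul : ∀ g h, d g = r h → r (mul g h) = r g
  mul_assoc : ∀ g h k, d g = r h → d h = r k → mul (mul g h) k = mul g (mul h k)
  d_idem : ∀ g, d (d g) = d g
  r_d : ∀ g, r (d g) = d g

/-- A (set theoretical) partial action of a groupoid `G` on a set `X`:
subsets `D g = X_g` and (totalized) bijections `act g : X_{g⁻¹} → X_g`, together with
the anchor map sending `x` to the unique identity `e` with `x ∈ X_e`. -/
structure PartialAction {G : Type u} (𝒢 : SetGroupoid G) (X : Type v) where
  D : G → Set X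
  act : G → X → X
  anchor : X → G
  anchor_isUnit : ∀ x, 𝒢.d (anchor x) = anchor x
  mem_anchor : ∀ x, x ∈ D (anchor x)
  anchor_unique : ∀ x e, 𝒢.d e = e → x ∈ D e → e = anchor x
  D_subset : ∀ g, D g ⊆ D (𝒢.r g)
  act_unit : ∀ e, 𝒢.d e = e → ∀ x ∈ D e, act e x = x
  act_mem : ∀ g, ∀ x ∈ D (𝒢.inv g), act g x ∈ D g
  act_act : ∀ g, ∀ x ∈ D (𝒢.inv g), act (𝒢.inv g) (act g x) = x
  act_comp_mem : ∀ g h, 𝒢.d g = 𝒢.r h → ∀ x, x ∈ D (𝒢.inv g) → x ∈ D h →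
      act g x ∈ D (𝒢.mul g h)
  act_comp : ∀ g h, 𝒢.d g = 𝒢.r h → ∀ x, x ∈ D (𝒢.inv h) → act h x ∈ D (𝒢.inv g) →
      act g (act h x) = act (𝒢.mul g h) x

namespace PartialAction

variable {G : Type u} {X : Type v} {𝒢 : SetGroupoid G}

/-- A partial action is global if `α_{gh} = α_g ∘ α_h` (as partial maps, including
equality of domains) for every composable pair `(g,h) ∈ G²`. -/
def IsGlobal (α : PartialAction 𝒢 X) : Prop :=
  ∀ g h, 𝒢.d g = 𝒢.r h →
    ((∀ x, x ∈ α.D (𝒢.inv (𝒢.mul g h)) ↔ x ∈ α.D (𝒢.inv h) ∧ α.act h x ∈ α.D (𝒢.inv g)) ∧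
      ∀ x ∈ α.D (𝒢.inv (𝒢.mul g h)), α.act (𝒢.mul g h) x = α.act g (α.act h x))

/-- Transitivity: some point has orbit equal to all of `X`. -/
def Transitive (α : PartialAction 𝒢 X) : Prop :=
  ∃ x : X, ∀ y : X, ∃ g, x ∈ α.D (𝒢.inv g) ∧ y = α.act g x

/-- Freeness: every stabilizer reduces to the anchor identity. -/
def Free (α : PartialAction 𝒢 X) : Prop :=
  ∀ (x : X) (g : G), x ∈ α.D (𝒢.inv g) → α.act g x = x → g = α.anchor x

end PartialAction

/-- `β` (a global action of `G` on `Y`) is a globalization of the partial action `α`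
of `G` on `X`, via the injection `i : X → Y`. -/
structure IsGlobalization {G : Type u} {X : Type v} {Y : Type w} {𝒢 : SetGroupoid G}
    (α : PartialAction 𝒢 X) (β : PartialAction 𝒢 Y) (i : X → Y) : Prop where
  global : β.IsGlobal
  inj : Function.Injective i
  cond_i : ∀ g, i '' α.D g = Set.range i ∩ β.act g '' (Set.range i ∩ β.D (𝒢.inv g))
  cond_ii : ∀ g, ∀ x ∈ α.D (𝒢.inv g), β.act g (i x) = i (α.act g x)
  cond_iii : ∀ g, β.D g = ⋃ h ∈ {h : G | 𝒢.r h = 𝒢.r g}, β.act h '' (i '' α.D (𝒢.d h))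

/-- The restriction of the global action `β` to the subset `X ⊆ Y`: `X_g = X ∩ β_g(X ∩ Y_{g⁻¹})`. -/
def restrictedDomain {G : Type u} {Y : Type v} {𝒢 : SetGroupoid G}
    (β : PartialAction 𝒢 Y) (X : Set Y) (g : G) : Set Y :=
  X ∩ β.act g '' (X ∩ β.D (𝒢.inv g))

/-- `Ȳ_g = ⋃_{h, r h = r g} β_h(X_{d h})`. -/
def envelopePiece {G : Type u} {Y : Type v} {𝒢 : SetGroupoid G}
    (β : PartialAction 𝒢 Y) (X : Set Y) (g : G) : Set Y :=
  ⋃ h ∈ {h : G | 𝒢.r h = 𝒢.r g}, β.act h '' restrictedDomain β X (𝒢.d h)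

/-- `Ȳ = ⋃_{e ∈ G₀} Ȳ_e`. -/
def envelope {G : Type u} {Y : Type v} {𝒢 : SetGroupoid G}
    (β : PartialAction 𝒢 Y) (X : Set Y) : Set Y :=
  ⋃ e ∈ {e : G | 𝒢.d e = e}, envelopePiece β X e

theorem aux_inv_unit {G : Type u} (𝒢 : SetGroupoid G) (e : G) (he : 𝒢.d e = e) :
    𝒢.inv e = e := by
  have hr : 𝒢.r e = e := by
    have := 𝒢.r_d e
    rwa [he] at this
  have h1 := 𝒢.mul_d_self (𝒢.inv e)
  rw [𝒢.d_inv, hr, 𝒢.inv_mul, he] at h1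
  exact h1.symm

theorem aux_d_r {G : Type u} (𝒢 : SetGroupoid G) (g : G) : 𝒢.d (𝒢.r g) = 𝒢.r g := by
  rw [← 𝒢.d_inv, 𝒢.d_idem]

theorem aux_r_r {G : Type u} (𝒢 : SetGroupoid G) (g : G) : 𝒢.r (𝒢.r g) = 𝒢.r g := by
  rw [← 𝒢.d_inv g, 𝒢.r_d]

theorem aux_D {G : Type u} {Y : Type v} {𝒢 : SetGroupoid G}
    (β : PartialAction 𝒢 Y) (hβ : β.IsGlobal) (g : G) (x : Y) :
    x ∈ β.D (𝒢.inv g) ↔ x ∈ β.D (𝒢.d g) := by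
  constructor
  · intro h
    have := β.D_subset _ h
    rwa [𝒢.r_inv] at this
  · intro h
    have := ((hβ (𝒢.inv g) g (𝒢.d_inv g)).1 x)
    rw [𝒢.inv_mul, aux_inv_unit 𝒢 _ (𝒢.d_idem g)] at this
    exact (this.1 h).1

theorem aux_mem {G : Type u} {Y : Type v} {𝒢 : SetGroupoid G}
    (β : PartialAction 𝒢 Y) (hβ : β.IsGlobal) (X : Set Y) (y : Y) :
    y ∈ envelope β X ↔ ∃ h, ∃ x ∈ X, x ∈ β.D (𝒢.inv h) ∧ β.act h x = y := by
  simp only [envelope, envelopePiece, restrictedDomain, Set.mem_iUnion, Set.mem_ofPred_eq,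
    Set.mem_image, Set.mem_inter_iff]
  constructor
  · rintro ⟨e, he, h, hr, x, ⟨hx, z, ⟨hz, hzD⟩, hzx⟩, hy⟩
    rw [aux_inv_unit 𝒢 _ (𝒢.d_idem h)] at hzD
    rw [β.act_unit _ (𝒢.d_idem h) z hzD] at hzx
    subst hzx
    exact ⟨h, z, hx, (aux_D β hβ h z).2 hzD, hy⟩
  · rintro ⟨h, x, hx, hD, hy⟩
    have hD' := (aux_D β hβ h x).1 hD
    refine ⟨𝒢.r h, aux_d_r 𝒢 h, h, (aux_r_r 𝒢 h).symm, x, ⟨hx, x, ⟨hx, ?_⟩, ?_⟩, hy⟩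
    · rwa [aux_inv_unit 𝒢 _ (𝒢.d_idem h)]
    · exact β.act_unit _ (𝒢.d_idem h) x hD'

theorem aux_act {G : Type u} {Y : Type v} {𝒢 : SetGroupoid G}
    (β : PartialAction 𝒢 Y) (hβ : β.IsGlobal) (X : Set Y) (g : G) (y : Y)
    (hy : y ∈ envelope β X) (hD : y ∈ β.D (𝒢.inv g)) : β.act g y ∈ envelope β X := by
  rw [aux_mem β hβ] at hy ⊢
  obtain ⟨h, x, hx, hxD, rfl⟩ := hy
  have h1 := β.anchor_unique _ _ (aux_d_r 𝒢 h) (β.D_subset _ (β.act_mem h x hxD))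
  have h2 := β.anchor_unique _ _ (𝒢.d_idem g) ((aux_D β hβ g _).1 hD)
  have h3 : 𝒢.d g = 𝒢.r h := h2.trans h1.symm
  exact ⟨𝒢.mul g h, x, hx, ((hβ g h h3).1 x).2 ⟨hxD, hD⟩, (β.act_comp g h h3 x hxD hD).symm⟩

/-- Given a global action `β` of a groupoid `G` on a set `Y` and a
subset `X ⊆ Y`, the set `Ȳ = ⋃_{e ∈ G₀} Ȳ_e` is the smallest `β`-invariant subset of `Y`
containing `X`: `X ⊆ Ȳ`, `β_g(Ȳ ∩ Y_{g⁻¹}) = Ȳ ∩ Y_g` for all `g`, and any `β`-invariant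
subset `S` of `Y` containing `X` contains `Ȳ`. -/
theorem smallest_invariant_subset {G : Type u} {Y : Type v} {𝒢 : SetGroupoid G}
    (β : PartialAction 𝒢 Y) (hβ : β.IsGlobal) (X : Set Y) :
    X ⊆ envelope β X ∧
    (∀ g : G, β.act g '' (envelope β X ∩ β.D (𝒢.inv g)) = envelope β X ∩ β.D g) ∧
    (∀ S : Set Y, X ⊆ S → (∀ g : G, β.act g '' (S ∩ β.D (𝒢.inv g)) ⊆ S) →
      envelope β X ⊆ S) := by
  refine ⟨?_, ?_, ?_⟩
  · intro x hx
    rw [aux_mem β hβ]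
    have hm := β.mem_anchor x
    have hu := β.anchor_isUnit x
    refine ⟨β.anchor x, x, hx, ?_, β.act_unit _ hu x hm⟩
    rwa [aux_inv_unit 𝒢 _ hu]
  · intro g
    ext y
    constructor
    · rintro ⟨x, ⟨hx, hD⟩, rfl⟩
      exact ⟨aux_act β hβ X g x hx hD, β.act_mem g x hD⟩
    · rintro ⟨hy, hD⟩
      have hD' : y ∈ β.D (𝒢.inv (𝒢.inv g)) := by rwa [𝒢.inv_inv]
      refine ⟨β.act (𝒢.inv g) y, ⟨aux_act β hβ X _ y hy hD', β.act_mem _ y hD'⟩, ?_⟩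
      have := β.act_act _ y hD'
      rwa [𝒢.inv_inv] at this
  · intro S hS hinv y hy
    rw [aux_mem β hβ] at hy
    obtain ⟨h, x, hx, hD, rfl⟩ := hy
    exact hinv h ⟨x, ⟨hS hx, hD⟩, rfl⟩
end

section
/- Let α = (X_g, α_g)_{g∈G} be a transitive partial action of a groupoid G on a set X, let x ∈ X, and suppose the global action β = (Y_g, β_g)_{g∈G} of G on Y is a globalization of α (with X ⊆ Y and i the inclusion). Then the map φ : H̄^x → Y defined by φ(h̄) = β_h(x) is well defined, bijective, and is an isomorphism of partial actions between the left-translation action δ of G on H̄^x and β. -/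
universe u v w

/-- Let `α` be a transitive partial action of a groupoid `G` on `X`,
`x ∈ X`, and let the global action `β` on `Y` be a globalization of `α` via `i`.
Consider `H^x = {h : d h = p x}` with the equivalence `h₁ ∼ h₂ ↔ r h₁ = r h₂ ∧
h₂⁻¹ h₁ ∈ stab_α(x)`, and the left-translation action `δ` of `G` on the quotient
`H̄^x` (with `(H̄^x)_g = {h̄ : r h = r g}`, `δ_g h̄ = (g h)‾`).  Then
`φ : H̄^x → Y`, `φ(h̄) = β_h(i x)`, is a well-defined bijection which is an
isomorphism between `δ` and `β`.  (The statement below unfolds all conditions on the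
quotient `H̄^x` to conditions on representatives in `H^x`.) -/
theorem globalization_iso_coset_action {G : Type u} {X : Type v} {Y : Type w}
    {𝒢 : SetGroupoid G} (α : PartialAction 𝒢 X) (htrans : α.Transitive) (x : X)
    (β : PartialAction 𝒢 Y) (i : X → Y) (h : IsGlobalization α β i) :
    -- φ is well defined on the quotient H̄^x
    (∀ h₁ h₂ : G, 𝒢.d h₁ = α.anchor x → 𝒢.d h₂ = α.anchor x →
      𝒢.r h₁ = 𝒢.r h₂ →
      (x ∈ α.D (𝒢.inv (𝒢.mul (𝒢.inv h₂) h₁)) ∧ α.act (𝒢.mul (𝒢.inv h₂) h₁) x = x) →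
      β.act h₁ (i x) = β.act h₂ (i x)) ∧
    -- φ is injective on the quotient H̄^x
    (∀ h₁ h₂ : G, 𝒢.d h₁ = α.anchor x → 𝒢.d h₂ = α.anchor x →
      β.act h₁ (i x) = β.act h₂ (i x) →
      (𝒢.r h₁ = 𝒢.r h₂ ∧
        x ∈ α.D (𝒢.inv (𝒢.mul (𝒢.inv h₂) h₁)) ∧ α.act (𝒢.mul (𝒢.inv h₂) h₁) x = x)) ∧
    -- φ is surjective onto Y
    (∀ y : Y, ∃ h : G, 𝒢.d h = α.anchor x ∧ y = β.act h (i x)) ∧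
    -- φ maps (H̄^x)_g onto Y_g, for every g
    (∀ g : G, β.D g = {y : Y | ∃ h : G, 𝒢.d h = α.anchor x ∧ 𝒢.r h = 𝒢.r g ∧
        y = β.act h (i x)}) ∧
    -- φ is equivariant: φ (δ_g h̄) = β_g (φ h̄)
    (∀ g h : G, 𝒢.d h = α.anchor x → 𝒢.d g = 𝒢.r h →
      β.act (𝒢.mul g h) (i x) = β.act g (β.act h (i x))) := by
  have rr : ∀ g, 𝒢.r (𝒢.r g) = 𝒢.r g := fun g => by
    have := 𝒢.r_d (𝒢.inv g); rwa [𝒢.d_inv] at this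
  have dr : ∀ g, 𝒢.d (𝒢.r g) = 𝒢.r g := fun g => by
    have := 𝒢.d_idem (𝒢.inv g); rwa [𝒢.d_inv] at this
  have ru : ∀ e, 𝒢.d e = e → 𝒢.r e = e := fun e he => by
    have := 𝒢.r_d e; rwa [he] at this
  have iu : ∀ e, 𝒢.d e = e → 𝒢.inv e = e := fun e he => by
    have h1 := 𝒢.mul_d_self (𝒢.inv e)
    rw [𝒢.d_inv, ru e he, 𝒢.inv_mul, he] at h1
    exact h1.symm
  have Deq : ∀ g k, 𝒢.r g = 𝒢.r k → β.D g = β.D k := fun g k hgk => by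
    rw [h.cond_iii g, h.cond_iii k, hgk]
  have anc : ∀ z, i z ∈ β.D (α.anchor z) := fun z => by
    have hu := α.anchor_isUnit z
    have h1 : i z ∈ i '' α.D (α.anchor z) := ⟨z, α.mem_anchor z, rfl⟩
    rw [h.cond_i] at h1
    obtain ⟨-, w, ⟨-, hw⟩, hwz⟩ := h1
    rw [iu _ hu] at hw
    rw [β.act_unit _ hu w hw] at hwz
    rwa [← hwz]
  have memA : ∀ z k, 𝒢.d k = α.anchor z → i z ∈ β.D (𝒢.inv k) := fun z k hk => by
    rw [Deq (𝒢.inv k) (α.anchor z)]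
    · exact anc z
    · rw [𝒢.r_inv, hk, ru _ (α.anchor_isUnit z)]
  have ancr : ∀ z g, z ∈ α.D g → 𝒢.r g = α.anchor z := fun z g hz =>
    α.anchor_unique z _ (dr g) (α.D_subset g hz)
  have equi : ∀ z g k, 𝒢.d k = α.anchor z → 𝒢.d g = 𝒢.r k →
      β.act (𝒢.mul g k) (i z) = β.act g (β.act k (i z)) := fun z g k hk hgk =>
    (h.global g k hgk).2 _ (memA z _ (by rw [𝒢.d_mul _ _ hgk, hk]))
  have hD : ∀ g : G, β.D g = {y : Y | ∃ h : G, 𝒢.d h = α.anchor x ∧ 𝒢.r h = 𝒢.r g ∧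
        y = β.act h (i x)} := by
    intro g
    ext y
    constructor
    · intro hy
      rw [h.cond_iii g] at hy
      simp only [Set.mem_iUnion] at hy
      obtain ⟨k, hk, _, ⟨z, hz, rfl⟩, rfl⟩ := hy
      obtain ⟨x₀, hx₀⟩ := htrans
      obtain ⟨a, ha, hxa⟩ := hx₀ x
      obtain ⟨b, hb, hzb⟩ := hx₀ z
      have da : 𝒢.d a = α.anchor x₀ := by rw [← ancr x₀ _ ha, 𝒢.r_inv]
      have db : 𝒢.d b = α.anchor x₀ := by rw [← ancr x₀ _ hb, 𝒢.r_inv]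
      have ra : 𝒢.r a = α.anchor x := ancr x a (hxa ▸ α.act_mem a x₀ ha)
      have rb : 𝒢.r b = α.anchor z := ancr z b (hzb ▸ α.act_mem b x₀ hb)
      have dk : 𝒢.d k = α.anchor z := by rw [← ancr z _ hz, 𝒢.r_d]
      have dia : 𝒢.d (𝒢.inv a) = α.anchor x := by rw [𝒢.d_inv, ra]
      have hba : 𝒢.d b = 𝒢.r (𝒢.inv a) := by rw [𝒢.r_inv, da, db]
      have hkba : 𝒢.d k = 𝒢.r (𝒢.mul b (𝒢.inv a)) := by rw [𝒢.r_mul _ _ hba, dk, rb]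
      have dba : 𝒢.d (𝒢.mul b (𝒢.inv a)) = α.anchor x := by rw [𝒢.d_mul _ _ hba, dia]
      refine ⟨𝒢.mul k (𝒢.mul b (𝒢.inv a)), ?_, ?_, ?_⟩
      · rw [𝒢.d_mul _ _ hkba, dba]
      · rw [𝒢.r_mul _ _ hkba]; exact hk
      · rw [equi x _ _ dba hkba, equi x _ _ dia hba]
        have e1 : β.act a (i x₀) = i x := by rw [h.cond_ii a x₀ ha, hxa]
        have e2 : β.act b (i x₀) = i z := by rw [h.cond_ii b x₀ hb, hzb]
        rw [← e1, β.act_act a _ (memA x₀ a da), e2]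
    · rintro ⟨k, hk, hkg, rfl⟩
      rw [← Deq k g hkg]
      exact β.act_mem k _ (memA x k hk)
  refine ⟨?_, ?_, ?_, hD, equi x⟩
  · rintro h₁ h₂ d₁ d₂ hr ⟨hx, hfix⟩
    have hc : 𝒢.d (𝒢.inv h₂) = 𝒢.r h₁ := by rw [𝒢.d_inv, hr]
    have hc' : 𝒢.d h₂ = 𝒢.r (𝒢.inv h₂) := by rw [𝒢.r_inv]
    have e : 𝒢.mul h₂ (𝒢.mul (𝒢.inv h₂) h₁) = h₁ := by
      rw [← 𝒢.mul_assoc _ _ _ hc' hc, 𝒢.mul_inv, ← hr, 𝒢.r_mul_self]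
    have := equi x h₂ (𝒢.mul (𝒢.inv h₂) h₁) (by rw [𝒢.d_mul _ _ hc, d₁])
      (by rw [𝒢.r_mul _ _ hc, 𝒢.r_inv])
    rw [e, h.cond_ii _ x hx, hfix] at this
    exact this
  · intro h₁ h₂ d₁ d₂ he
    have m₁ := β.D_subset _ (β.act_mem h₁ _ (memA x h₁ d₁))
    have m₂ := β.D_subset _ (β.act_mem h₂ _ (memA x h₂ d₂))
    have hr : 𝒢.r h₁ = 𝒢.r h₂ := by
      rw [β.anchor_unique _ _ (dr h₁) m₁, β.anchor_unique _ _ (dr h₂) m₂, he]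
    have hc : 𝒢.d (𝒢.inv h₂) = 𝒢.r h₁ := by rw [𝒢.d_inv, hr]
    have hk := equi x (𝒢.inv h₂) h₁ d₁ hc
    rw [he, β.act_act h₂ _ (memA x h₂ d₂)] at hk
    have dk : 𝒢.d (𝒢.mul (𝒢.inv h₂) h₁) = α.anchor x := by rw [𝒢.d_mul _ _ hc, d₁]
    generalize 𝒢.mul (𝒢.inv h₂) h₁ = k at hk dk
    have mk := memA x k dk
    have hxk : x ∈ α.D (𝒢.inv k) := by
      have : i x ∈ i '' α.D (𝒢.inv k) := by
        rw [h.cond_i]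
        refine ⟨⟨x, rfl⟩, i x, ⟨⟨x, rfl⟩, ?_⟩, ?_⟩
        · have := β.act_mem k _ mk
          rwa [hk, ← 𝒢.inv_inv k] at this
        · have := β.act_act k _ mk
          rwa [hk] at this
      obtain ⟨w, hw, hwx⟩ := this
      rwa [← h.inj hwx]
    refine ⟨hr, hxk, h.inj ?_⟩
    rw [← h.cond_ii k x hxk, hk]
  · intro y
    have := β.mem_anchor y
    rw [hD] at this
    obtain ⟨k, hk, -, hy⟩ := this
    exact ⟨k, hk, hy⟩
end

section
/- Let α be a transitive partial action of a group G on a set X. Then any globalization of α is isomorphic (as a G-action) to the left coset action of G on G/stab_α(x), for any x ∈ X. -/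
universe u v w

/-- A partial action of a group `G` on a set `X`: subsets `D g = X_g` and (totalized)
bijections `act g : X_{g⁻¹} → X_g`. -/
structure PartialGroupAction (G : Type u) [Group G] (X : Type v) where
  D : G → Set X
  act : G → X → X
  D_one : D (1 : G) = Set.univ
  act_one : ∀ x : X, act 1 x = x
  act_mem : ∀ g : G, ∀ x ∈ D g⁻¹, act g x ∈ D g
  act_act : ∀ g : G, ∀ x ∈ D g⁻¹, act g⁻¹ (act g x) = x
  act_comp_mem : ∀ g h : G, ∀ x, x ∈ D g⁻¹ → x ∈ D h → act g x ∈ D (g * h)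
  act_comp : ∀ g h : G, ∀ x, x ∈ D h⁻¹ → act h x ∈ D g⁻¹ →
      act g (act h x) = act (g * h) x

/-- Let `α` be a transitive partial action of a group `G` on `X` and
let the `G`-action on `Y` (a genuine `MulAction`) be a globalization of `α` via the
injection `i`.  Then for any `x ∈ X` this globalization is isomorphic to the left coset
action of `G` on `G / stab_α(x)`: there is a surjection `φ : G → Y` (namely
`g ↦ g • i x`) whose fibers are exactly the left cosets of `stab_α(x)` and which is
equivariant; i.e. the induced bijection `G / stab_α(x) → Y` is a `G`-equivariant
bijection. -/
theorem globalization_iso_left_coset_action {G : Type u} {X : Type v} {Y : Type w}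
    [Group G] (α : PartialGroupAction G X)
    (htrans : ∃ x : X, ∀ y : X, ∃ g : G, x ∈ α.D g⁻¹ ∧ y = α.act g x)
    [MulAction G Y] (i : X → Y) (hi : Function.Injective i)
    (hcond_i : ∀ g : G, i '' α.D g = Set.range i ∩ (fun y => g • y) '' Set.range i)
    (hcond_ii : ∀ g : G, ∀ x ∈ α.D g⁻¹, g • i x = i (α.act g x))
    (hcond_iii : ∀ y : Y, ∃ (g : G) (x : X), y = g • i x)
    (x : X) :
    ∃ φ : G → Y,
      (∀ g : G, φ g = g • i x) ∧
      Function.Surjective φ ∧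
      (∀ g₁ g₂ : G, φ g₁ = φ g₂ ↔
        (x ∈ α.D (g₂⁻¹ * g₁)⁻¹ ∧ α.act (g₂⁻¹ * g₁) x = x)) ∧
      (∀ g h : G, φ (g * h) = g • φ h) := by
  refine ⟨fun g => g • i x, fun _ => rfl, ?_, ?_, fun g h => mul_smul g h (i x)⟩
  · intro y
    obtain ⟨g, z, rfl⟩ := hcond_iii y
    obtain ⟨x₀, h₀⟩ := htrans
    obtain ⟨a, ha, hxa⟩ := h₀ x
    obtain ⟨b, hb, hzb⟩ := h₀ z
    refine ⟨g * b * a⁻¹, ?_⟩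
    have h1 : i x = a • i x₀ := by rw [hcond_ii a x₀ ha, hxa]
    have h2 : i z = b • i x₀ := by rw [hcond_ii b x₀ hb, hzb]
    simp only [h1, h2, smul_smul, inv_mul_cancel_right]
  · intro g₁ g₂
    have key : g₁ • i x = g₂ • i x ↔ (g₂⁻¹ * g₁) • i x = i x := by
      rw [mul_smul, inv_smul_eq_iff]
    show g₁ • i x = g₂ • i x ↔ _
    rw [key]
    generalize g₂⁻¹ * g₁ = k
    constructor
    · intro hk
      have hx : i x ∈ i '' α.D k⁻¹ := by
        rw [hcond_i]
        refine ⟨⟨x, rfl⟩, i x, ⟨x, rfl⟩, ?_⟩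
        show k⁻¹ • i x = i x
        rw [inv_smul_eq_iff, hk]
      obtain ⟨z, hz, hzx⟩ := hx
      have hxz := hi hzx
      subst hxz
      exact ⟨hz, hi (by rw [← hcond_ii k z hz, hk])⟩
    · rintro ⟨hx, hk⟩
      rw [hcond_ii k x hx, hk]
end
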